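/- For every prime p ≥ 5 with p ≠ 11, there exists μ ∈ {4, 6} such that for every integer k ≥ 0, b₂₁((11p^{μk} − 5)/6) is odd. In particular, b₂₁(n) is odd for infinitely many nonnegative integers n. -/

import Mathlib

/-- `b21 n` is the number of 21-regular partitions of `n`,
i.e. partitions of `n` none of whose parts is divisible by 21. -/
def b21 (n : ℕ) : ℕ :=
  (Finset.univ.filter fun c : n.Partition => ∀ i ∈ c.parts, ¬ (21 ∣ i)).card

noncomputable section

open PowerSeries

/-- series with exponents `f y`, `P y`, mod 2 -/
def th (P : ℕ → Prop) (f : ℕ → ℕ) : (ZMod 2)⟦X⟧ :=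
  open Classical in PowerSeries.mk fun n => if ∃ y, P y ∧ f y = n then 1 else 0

lemma th_coeff_mul (P Q : ℕ → Prop) (f g : ℕ → ℕ)
    (hf : ∀ y z, P y → P z → f y = f z → y = z)
    (hg : ∀ y z, Q y → Q z → g y = g z → y = z) (N : ℕ) :
    coeff N (th P f * th Q g) =
      (({w : ℕ × ℕ | P w.1 ∧ Q w.2 ∧ f w.1 + g w.2 = N}.ncard : ℕ) : ZMod 2) := by
  classical
  rw [coeff_mul]
  simp only [th, coeff_mk, ← ite_and, mul_ite, mul_one, mul_zero]
  rw [Finset.sum_boole]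
  congr 1
  rw [← Set.ncard_coe_finset]
  symm
  apply Set.ncard_congr (fun w _ => (f w.1, g w.2))
  · rintro ⟨a, b⟩ ⟨h1, h2, h3⟩
    simp at h3 ⊢
    exact ⟨h3, ⟨b, h2, rfl⟩, ⟨a, h1, rfl⟩⟩
  · rintro ⟨a, b⟩ ⟨c, d⟩ ⟨h1, h2, h3⟩ ⟨h4, h5, h6⟩ h
    simp at h
    simp only [Prod.mk.injEq]
    exact ⟨hf _ _ h1 h4 h.1, hg _ _ h2 h5 h.2⟩
  · rintro ⟨a, b⟩ h
    simp at h
    obtain ⟨h1, ⟨z, hz, rfl⟩, ⟨y, hy, rfl⟩⟩ := h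
    exact ⟨(y, z), ⟨hy, hz, h1⟩, rfl⟩

lemma th_expand (P : ℕ → Prop) (f : ℕ → ℕ) (k : ℕ) (hk : k ≠ 0) :
    expand k hk (th P f) = th P (fun y => k * f y) := by
  classical
  ext n
  rw [coeff_expand]
  simp only [th, coeff_mk]
  split_ifs with h1 h2 h3 h3 h2
  · rfl
  · obtain ⟨y, hy, e⟩ := h2
    exact absurd ⟨y, hy, by rw [e, Nat.mul_div_cancel' h1]⟩ h3
  · obtain ⟨y, hy, e⟩ := h3
    exact absurd ⟨y, hy, by rw [← e, Nat.mul_div_cancel_left _ (Nat.pos_of_ne_zero hk)]⟩ h2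
  · rfl
  · obtain ⟨y, hy, e⟩ := h2
    exact absurd ⟨_, e.symm⟩ h1
  · rfl

lemma sq_expand (F : (ZMod 2)⟦X⟧) : F ^ 2 = expand 2 two_ne_zero F := by
  ext n
  rw [coeff_expand, sq, coeff_mul]
  have key : ∑ p ∈ (Finset.HasAntidiagonal.antidiagonal n).filter (fun p => ¬ p.1 = p.2), coeff p.1 F * coeff p.2 F = 0 := by
    apply Finset.sum_involution (fun p _ => (p.2, p.1))
    · intro p hp
      rw [mul_comm, CharTwo.add_self_eq_zero]
    · rintro ⟨a, b⟩ hp _ h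
      simp at hp h
      omega
    · rintro ⟨a, b⟩ hp
      simp at hp ⊢
      omega
    · simp
  rw [← Finset.sum_filter_add_sum_filter_not _ (fun p => p.1 = p.2), key, add_zero]
  have hs : ∀ x : ZMod 2, x * x = x := by decide
  split_ifs with h
  · obtain ⟨m, rfl⟩ := h
    rw [Finset.sum_eq_single (m, m)]
    · simp [hs]
    · rintro ⟨a, b⟩ hp h
      simp at hp h
      omega
    · intro h; simp at h; omega
  · apply Finset.sum_eq_zero
    rintro ⟨a, b⟩ hp
    simp at hp
    omega

/-- fixed point free involution -/
lemma ncard_invol {α : Type*} (S : Set α) (t : α → α) (h1 : ∀ a ∈ S, t a ∈ S)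
    (h2 : ∀ a ∈ S, t (t a) = a) (h3 : ∀ a ∈ S, t a ≠ a) : ((S.ncard : ℕ) : ZMod 2) = 0 := by
  classical
  by_cases hS : S.Finite
  · lift S to Finset α using hS
    rw [Set.ncard_coe_finset, Finset.card_eq_sum_ones, Nat.cast_sum]
    simp only [Finset.mem_coe] at *
    apply Finset.sum_involution (fun a _ => t a)
    · intro a ha; decide
    · intro a ha _; exact h3 a ha
    · intro a ha; exact h1 a ha
    · intro a ha; exact h2 a ha
  · rw [Set.Infinite.ncard hS]; rfl

lemma abs_self_le_sq (a : ℤ) : |a| ≤ a ^ 2 := by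
  rw [← sq_abs]
  rcases (abs_nonneg a).eq_or_lt with h | h
  · rw [← h]; norm_num
  · nlinarith

lemma finite_form (k M : ℕ) (hk : 0 < k) (S : Set (ℤ × ℤ))
    (h : ∀ w ∈ S, w.1 ^ 2 + k * w.2 ^ 2 = M) : S.Finite := by
  apply (Set.finite_Icc ((-M, -M) : ℤ × ℤ) (M, M)).subset
  rintro ⟨a, b⟩ hw
  have := h _ hw
  simp only at this
  have hk' : (1 : ℤ) ≤ k := by exact_mod_cast hk
  have h1 : a ^ 2 ≤ M := by nlinarith [sq_nonneg b]
  have h2 : b ^ 2 ≤ M := by nlinarith [sq_nonneg b, sq_nonneg a]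
  have h3 := abs_le.1 ((abs_self_le_sq a).trans h1)
  have h4 := abs_le.1 ((abs_self_le_sq b).trans h2)
  exact ⟨⟨h3.1, h4.1⟩, ⟨h3.2, h4.2⟩⟩

open Classical in
lemma fixed_ncard (M : ℕ) : (({w : ℤ × ℤ | 0 < w.1 ∧ w.2 = 0 ∧ w.1 ^ 2 = M ∧ ¬ (3 : ℤ) ∣ w.1}.ncard : ℕ) : ZMod 2)
    = if ∃ c : ℕ, c ^ 2 = M ∧ ¬ 3 ∣ c then 1 else 0 := by
  split_ifs with h
  · obtain ⟨c, rfl, hc⟩ := h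
    have : {w : ℤ × ℤ | 0 < w.1 ∧ w.2 = 0 ∧ w.1 ^ 2 = ((c ^ 2 : ℕ) : ℤ) ∧ ¬ (3 : ℤ) ∣ w.1} = {((c : ℤ), (0 : ℤ))} := by
      ext ⟨a, b⟩
      simp only [Set.mem_ofPred_eq, Set.mem_singleton_iff, Prod.mk.injEq]
      constructor
      · rintro ⟨h1, h2, h3, h4⟩
        refine ⟨?_, h2⟩
        push_cast at h3
        rcases sq_eq_sq_iff_eq_or_eq_neg.1 h3 with h | h <;> omega
      · rintro ⟨rfl, rfl⟩
        refine ⟨by omega, rfl, by push_cast; rfl, by omega⟩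
    rw [this]; simp
  · have : {w : ℤ × ℤ | 0 < w.1 ∧ w.2 = 0 ∧ w.1 ^ 2 = M ∧ ¬ (3 : ℤ) ∣ w.1} = ∅ := by
      ext ⟨a, b⟩
      simp only [Set.mem_ofPred_eq, Set.mem_empty_iff_false, iff_false]
      rintro ⟨h1, h2, h3, h4⟩
      apply h
      lift a to ℕ using h1.le
      exact ⟨a, by exact_mod_cast h3, by omega⟩
    rw [this]; simp

open Classical in
/-- simple involution -/
lemma ncard_C (k M : ℕ) (hk : 0 < k) :
    (({w : ℤ × ℤ | 0 < w.1 ∧ w.1 ^ 2 + k * w.2 ^ 2 = M ∧ ¬ (3 : ℤ) ∣ w.1}.ncard : ℕ) : ZMod 2)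
      = if ∃ c : ℕ, c ^ 2 = M ∧ ¬ 3 ∣ c then 1 else 0 := by
  set S := {w : ℤ × ℤ | 0 < w.1 ∧ w.1 ^ 2 + k * w.2 ^ 2 = M ∧ ¬ (3 : ℤ) ∣ w.1} with hS
  have hfin : S.Finite := finite_form k M hk S (fun w hw => hw.2.1)
  have hsplit := Set.ncard_inter_add_ncard_sdiff_eq_ncard S {w | w.2 = 0} hfin
  rw [← hsplit, Nat.cast_add, ← fixed_ncard]
  have e1 : S ∩ {w | w.2 = 0} = {w : ℤ × ℤ | 0 < w.1 ∧ w.2 = 0 ∧ w.1 ^ 2 = M ∧ ¬ (3 : ℤ) ∣ w.1} := by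
    ext ⟨a, b⟩
    simp only [hS, Set.mem_inter_iff, Set.mem_ofPred_eq]
    constructor
    · rintro ⟨⟨h1, h2, h3⟩, rfl⟩
      exact ⟨h1, rfl, by simpa using h2, h3⟩
    · rintro ⟨h1, rfl, h2, h3⟩
      exact ⟨⟨h1, by simpa using h2, h3⟩, rfl⟩
  rw [e1, ncard_invol (S \ {w | w.2 = 0}) (fun w => (w.1, -w.2)), add_zero]
  · rintro ⟨a, b⟩ ⟨⟨h1, h2, h3⟩, h4⟩
    refine ⟨⟨h1, by simpa using h2, h3⟩, by simpa using h4⟩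
  · rintro ⟨a, b⟩ _; simp
  · rintro ⟨a, b⟩ ⟨⟨h1, h2, h3⟩, h4⟩ h
    simp at h h4
    omega

open Classical in
/-- twisted involution -/
lemma ncard_B (k M : ℕ) (hk : 0 < k) :
    (({w : ℤ × ℤ | 0 < w.1 ∧ w.1 ^ 2 + k * w.2 ^ 2 = M ∧ ¬ (3 : ℤ) ∣ w.1 + w.2}.ncard : ℕ) : ZMod 2)
      = (if ∃ c : ℕ, c ^ 2 = M ∧ ¬ 3 ∣ c then 1 else 0) +
       (({w : ℕ × ℕ | ¬ 3 ∣ w.1 ∧ ¬ 3 ∣ w.2 ∧ w.1 ^ 2 + k * w.2 ^ 2 = M}.ncard : ℕ) : ZMod 2) := by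
  set S := {w : ℤ × ℤ | 0 < w.1 ∧ w.1 ^ 2 + k * w.2 ^ 2 = M ∧ ¬ (3 : ℤ) ∣ w.1 + w.2} with hS
  have hfin : S.Finite := finite_form k M hk S (fun w hw => hw.2.1)
  have hsplit := Set.ncard_inter_add_ncard_sdiff_eq_ncard S {w | w.2 = 0} hfin
  have hsplit2 := Set.ncard_inter_add_ncard_sdiff_eq_ncard (S \ {w | w.2 = 0})
    {w | ¬ (3 : ℤ) ∣ w.1 ∧ ¬ (3 : ℤ) ∣ w.2} (hfin.subset Set.sdiff_subset)
  rw [← hsplit, ← hsplit2, Nat.cast_add, Nat.cast_add, ← fixed_ncard]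
  have e1 : S ∩ {w | w.2 = 0} = {w : ℤ × ℤ | 0 < w.1 ∧ w.2 = 0 ∧ w.1 ^ 2 = M ∧ ¬ (3 : ℤ) ∣ w.1} := by
    ext ⟨a, b⟩
    simp only [hS, Set.mem_inter_iff, Set.mem_ofPred_eq]
    constructor
    · rintro ⟨⟨h1, h2, h3⟩, rfl⟩
      exact ⟨h1, rfl, by simpa using h2, by simpa using h3⟩
    · rintro ⟨h1, rfl, h2, h3⟩
      exact ⟨⟨h1, by simpa using h2, by simpa using h3⟩, rfl⟩
  rw [e1, ncard_invol ((S \ {w | w.2 = 0}) \ _) (fun w => (w.1, -w.2)), add_zero]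
  · congr 2
    apply Set.ncard_congr (fun w _ => (w.1.natAbs, w.2.natAbs))
    · rintro ⟨a, b⟩ ⟨⟨⟨h1, h2, h3⟩, h4⟩, h5, h6⟩
      simp only [Set.mem_ofPred_eq] at *
      refine ⟨by omega, by omega, ?_⟩
      zify
      simpa using h2
    · rintro ⟨a, b⟩ ⟨c, d⟩ ⟨⟨⟨h1, h2, h3⟩, h4⟩, h5, h6⟩ ⟨⟨⟨h1', h2', h3'⟩, h4'⟩, h5', h6'⟩ h
      simp only [Set.mem_ofPred_eq, Prod.mk.injEq] at *
      have e1 : a = c := by omega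
      have e2 : b = d ∨ b = - d := by omega
      subst e1
      refine ⟨rfl, ?_⟩
      rcases e2 with e2 | e2
      · exact e2
      · subst e2
        have i1 : a % 3 = 1 ∨ a % 3 = 2 := by omega
        have i2 : d % 3 = 1 ∨ d % 3 = 2 := by omega
        rcases i1 with i1 | i1 <;> rcases i2 with i2 | i2 <;> omega
    · rintro ⟨a, b⟩ ⟨h1, h2, h3⟩
      simp only at h1 h2 h3
      zify at h3
      by_cases h : (3 : ℤ) ∣ a + b
      · refine ⟨((a : ℤ), -(b : ℤ)), ⟨⟨⟨?_, ?_, ?_⟩, ?_⟩, ?_, ?_⟩, ?_⟩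
        · show (0 : ℤ) < a
          omega
        · simpa using h3
        · simp only; omega
        · simp only [Set.mem_ofPred_eq]; omega
        · simp only; omega
        · simp only; omega
        · simp
      · refine ⟨((a : ℤ), (b : ℤ)), ⟨⟨⟨?_, ?_, ?_⟩, ?_⟩, ?_, ?_⟩, ?_⟩
        · show (0 : ℤ) < a
          omega
        · simpa using h3
        · simp only; omega
        · simp only [Set.mem_ofPred_eq]; omega
        · simp only; omega
        · simp only; omega
        · simp
  · rintro ⟨a, b⟩ ⟨⟨⟨h1, h2, h3⟩, h4⟩, h5⟩
    simp only [Set.mem_ofPred_eq] at *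
    refine ⟨⟨⟨h1, by simpa using h2, ?_⟩, by simpa using h4⟩, ?_⟩
    · simp only; omega
    · simp only [Set.mem_ofPred_eq]; omega
  · rintro ⟨a, b⟩ _; simp
  · rintro ⟨a, b⟩ ⟨⟨⟨h1, h2, h3⟩, h4⟩, h5⟩ h
    simp at h h4
    omega

end

noncomputable section

open PowerSeries

def PP (M : ℕ) : Set (ℕ × ℕ) := {w : ℕ × ℕ | ¬ 3 ∣ w.1 ∧ ¬ 3 ∣ w.2 ∧ w.1 ^ 2 + 2 * w.2 ^ 2 = M}

lemma PP_bij (M : ℕ) (hM : M % 2 = 1) : (PP (3 * M)).ncard =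
    {w : ℤ × ℤ | 0 < w.1 ∧ w.1 ^ 2 + (2 : ℕ) * w.2 ^ 2 = M ∧ ¬ (3 : ℤ) ∣ w.1 + w.2}.ncard := by
  symm
  apply Set.ncard_congr (fun w _ => ((w.1 - 2 * w.2).natAbs, (w.1 + w.2).natAbs))
  · rintro ⟨a, b⟩ ⟨h1, h2, h3⟩
    simp only [PP, Set.mem_ofPred_eq] at *
    refine ⟨by omega, by omega, ?_⟩
    zify
    rw [sq_abs, sq_abs]
    push_cast at h2
    linear_combination 3 * h2
  · rintro ⟨a, b⟩ ⟨c, d⟩ ⟨h1, h2, h3⟩ ⟨h1', h2', h3'⟩ h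
    simp only [Set.mem_ofPred_eq, Prod.mk.injEq] at *
    omega
  · rintro ⟨y, z⟩ ⟨h1, h2, h3⟩
    simp only at h1 h2 h3
    zify at h3
    have key : ∀ z' : ℤ, z' = z ∨ z' = -z → (3 : ℤ) ∣ z' - y → ∃ w : ℤ × ℤ, ∃ _ : w ∈ {w : ℤ × ℤ | 0 < w.1 ∧ w.1 ^ 2 + (2 : ℕ) * w.2 ^ 2 = M ∧ ¬ (3 : ℤ) ∣ w.1 + w.2},
        ((w.1 - 2 * w.2).natAbs, (w.1 + w.2).natAbs) = (y, z) := by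
      intro z' hz' hd
      obtain ⟨b, hb⟩ := hd
      have hz2 : z' ^ 2 = (z : ℤ) ^ 2 := by rcases hz' with h | h <;> rw [h]; ring
      obtain ⟨a, ha⟩ : ∃ a : ℤ, a = y + 2 * b := ⟨_, rfl⟩
      have hy : (y : ℤ) = a - 2 * b := by omega
      have hzz : z' = a + b := by omega
      rw [← hz2, hy, hzz] at h3
      have hform : a ^ 2 + 2 * b ^ 2 = M := by linarith
      have ha0 : a ≠ 0 := by
        rintro rfl
        have : (M : ℤ) = 2 * b ^ 2 := by linarith
        omega
      rcases lt_or_gt_of_ne ha0 with hlt | hlt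
      · refine ⟨(-a, -b), ⟨by simpa using hlt, by push_cast; simpa using hform, ?_⟩, ?_⟩
        · simp only; omega
        · simp only [Prod.mk.injEq]; omega
      · refine ⟨(a, b), ⟨by simpa using hlt, by push_cast; simpa using hform, ?_⟩, ?_⟩
        · simp only; omega
        · simp only [Prod.mk.injEq]; omega
    by_cases hd : (3 : ℤ) ∣ z - y
    · exact key z (Or.inl rfl) hd
    · refine key (-z) (Or.inr rfl) ?_
      have i1 : y % 3 = 1 ∨ y % 3 = 2 := by omega
      have i2 : z % 3 = 1 ∨ z % 3 = 2 := by omega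
      rcases i1 with i1 | i1 <;> rcases i2 with i2 | i2 <;> omega

open Classical in
lemma PP_rec (M : ℕ) (hM : M % 2 = 1) : ((PP (3 * M)).ncard : ZMod 2) =
    (if ∃ c : ℕ, c ^ 2 = M ∧ ¬ 3 ∣ c then 1 else 0) + ((PP M).ncard : ZMod 2) := by
  rw [PP_bij M hM, ncard_B 2 M (by norm_num)]
  rfl

lemma sq_mod3 {c : ℕ} (h : ¬ 3 ∣ c) : c ^ 2 % 3 = 1 := by
  have i1 : c % 3 = 1 ∨ c % 3 = 2 := by omega
  rcases i1 with i1 | i1 <;> simp [Nat.pow_mod, i1]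

open Classical in
lemma PP_val (M : ℕ) (hM : M % 2 = 1) : ((PP (3 * M)).ncard : ZMod 2) =
    if (∃ c : ℕ, c ^ 2 = M) ∨ (∃ c : ℕ, 3 * c ^ 2 = M) then 1 else 0 := by
  induction M using Nat.strong_induction_on with
  | _ M ih =>
  rw [PP_rec M hM]
  by_cases h3 : 3 ∣ M
  · obtain ⟨M', rfl⟩ := h3
    rw [if_neg, zero_add, ih M' (by omega) (by omega)]
    · congr 1
      apply propext
      constructor
      · rintro (⟨c, rfl⟩ | ⟨c, rfl⟩)
        · exact Or.inr ⟨c, rfl⟩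
        · exact Or.inl ⟨3 * c, by ring⟩
      · rintro (⟨c, hc⟩ | ⟨c, hc⟩)
        · have : 3 ∣ c := by
            by_contra h
            have := sq_mod3 h
            omega
          obtain ⟨d, rfl⟩ := this
          exact Or.inr ⟨d, by linarith [mul_pow 3 d 2]⟩
        · exact Or.inl ⟨c, by omega⟩
    · rintro ⟨c, hc, h⟩
      have := sq_mod3 h
      omega
  · have : PP M = ∅ := by
      ext ⟨a, b⟩
      simp only [PP, Set.mem_ofPred_eq, Set.mem_empty_iff_false, iff_false]
      rintro ⟨h1, h2, h⟩
      have := sq_mod3 h1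
      have := sq_mod3 h2
      omega
    rw [this, Set.ncard_empty, Nat.cast_zero, add_zero]
    congr 1
    apply propext
    constructor
    · rintro ⟨c, hc, h⟩
      exact Or.inl ⟨c, hc⟩
    · rintro (⟨c, hc⟩ | ⟨c, hc⟩)
      · refine ⟨c, hc, ?_⟩
        rintro ⟨d, rfl⟩
        apply h3
        exact ⟨3 * d ^ 2, by rw [← hc]; ring⟩
      · exact absurd ⟨_, hc.symm⟩ h3

/-! theta series -/
def c6 (y : ℕ) : Prop := y % 6 = 1 ∨ y % 6 = 5
def g24 (y : ℕ) : ℕ := (y ^ 2 - 1) / 24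
def g8 (y : ℕ) : ℕ := (y ^ 2 - 1) / 8
def g3 (y : ℕ) : ℕ := (y ^ 2 - 1) / 3

lemma g24_eq {y : ℕ} (h : c6 y) : y ^ 2 = 24 * g24 y + 1 := by
  have h1 : y ^ 2 % 24 = 1 := by
    have : y % 24 < 24 := Nat.mod_lt _ (by norm_num)
    have h' : (y % 24) % 6 = 1 ∨ (y % 24) % 6 = 5 := by unfold c6 at h; omega
    rw [Nat.pow_mod]
    generalize y % 24 = r at *
    interval_cases r <;> first | rfl | omega
  unfold g24; omega

lemma g8_eq {y : ℕ} (h : y % 2 = 1) : y ^ 2 = 8 * g8 y + 1 := by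
  have h1 : y ^ 2 % 8 = 1 := by
    have : y % 8 < 8 := Nat.mod_lt _ (by norm_num)
    have h' : (y % 8) % 2 = 1 := by omega
    rw [Nat.pow_mod]
    generalize y % 8 = r at *
    interval_cases r <;> first | rfl | omega
  unfold g8; omega

lemma g3_eq {y : ℕ} (h : ¬ 3 ∣ y) : y ^ 2 = 3 * g3 y + 1 := by
  have h1 := sq_mod3 h
  unfold g3; omega

lemma sq_inj {y z : ℕ} (h : y ^ 2 = z ^ 2) : y = z := by
  exact Nat.pow_left_injective (by norm_num : (2 : ℕ) ≠ 0) h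

lemma g24_inj (k : ℕ) (hk : 0 < k) : ∀ y z, c6 y → c6 z → k * g24 y = k * g24 z → y = z := by
  intro y z hy hz h
  have := Nat.eq_of_mul_eq_mul_left hk h
  exact sq_inj (by rw [g24_eq hy, g24_eq hz, this])

lemma g8_inj : ∀ y z, y % 2 = 1 → z % 2 = 1 → g8 y = g8 z → y = z := by
  intro y z hy hz h
  exact sq_inj (by rw [g8_eq hy, g8_eq hz, h])

lemma g3_inj : ∀ y z, ¬ 3 ∣ y → ¬ 3 ∣ z → g3 y = g3 z → y = z := by
  intro y z hy hz h
  exact sq_inj (by rw [g3_eq hy, g3_eq hz, h])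

def Th : (ZMod 2)⟦X⟧ := th c6 g24
def Ps : (ZMod 2)⟦X⟧ := th (fun y => y % 2 = 1) g8
def Om : (ZMod 2)⟦X⟧ := th (fun y => ¬ 3 ∣ y) g3

lemma sq_mod8_odd {y : ℕ} (h : y % 2 = 1) : y ^ 2 % 8 = 1 := by rw [g8_eq h]; omega
lemma sq_mod8_even {y : ℕ} (h : y % 2 = 0) : y ^ 2 % 4 = 0 := by
  obtain ⟨k, rfl⟩ : 2 ∣ y := by omega
  rw [mul_pow]; omega

lemma th_one (P : ℕ → Prop) : th P = th P := rfl

lemma I1 : Th * expand 2 two_ne_zero Th = Ps := by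
  classical
  ext N
  rw [Th, th_expand, th_coeff_mul _ _ _ _ (by simpa using g24_inj 1 one_pos) (g24_inj 2 two_pos)]
  have : {w : ℕ × ℕ | c6 w.1 ∧ c6 w.2 ∧ g24 w.1 + 2 * g24 w.2 = N} = PP (3 * (8 * N + 1)) := by
    ext ⟨a, b⟩
    simp only [PP, Set.mem_ofPred_eq]
    constructor
    · rintro ⟨h1, h2, h3⟩
      have := g24_eq h1
      have := g24_eq h2
      unfold c6 at h1 h2
      refine ⟨by omega, by omega, by omega⟩
    · rintro ⟨h1, h2, h3⟩
      have e1 : a % 2 = 1 := by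
        by_contra h
        have := sq_mod8_even (y := a) (by omega)
        omega
      have e2 : b % 2 = 1 := by
        by_contra h
        have := sq_mod8_even (y := b) (by omega)
        have := sq_mod8_odd e1
        omega
      have c1 : c6 a := by unfold c6; omega
      have c2 : c6 b := by unfold c6; omega
      have := g24_eq c1
      have := g24_eq c2
      refine ⟨c1, c2, by omega⟩
  rw [this, PP_val _ (by omega)]
  simp only [Ps, th, coeff_mk]
  congr 1
  apply propext
  constructor
  · rintro (⟨c, hc⟩ | ⟨c, hc⟩)
    · have e1 : c % 2 = 1 := by
        by_contra h
        have := sq_mod8_even (y := c) (by omega)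
        omega
      refine ⟨c, e1, ?_⟩
      have := g8_eq e1
      omega
    · exfalso
      rcases Nat.mod_two_eq_zero_or_one c with h | h
      · have := sq_mod8_even h
        omega
      · have := sq_mod8_odd h
        omega
  · rintro ⟨c, hc, rfl⟩
    exact Or.inl ⟨c, g8_eq hc⟩

lemma I2 : Th * Om = expand 3 three_ne_zero Ps := by
  classical
  ext N
  rw [Th, Ps, Om, th_expand, th_coeff_mul _ _ _ _ (by simpa using g24_inj 1 one_pos) g3_inj]
  have : {w : ℕ × ℕ | c6 w.1 ∧ ¬ 3 ∣ w.2 ∧ g24 w.1 + g3 w.2 = N}.ncard = (PP (3 * (8 * N + 3))).ncard := by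
    apply Set.ncard_congr (fun w _ => (w.1, 2 * w.2))
    · rintro ⟨a, b⟩ ⟨h1, h2, h3⟩
      simp only [PP, Set.mem_ofPred_eq] at *
      have := g24_eq h1
      have := g3_eq h2
      unfold c6 at h1
      refine ⟨by omega, by omega, ?_⟩
      rw [mul_pow]
      omega
    · rintro ⟨a, b⟩ ⟨c, d⟩ _ _ h
      simp only [Prod.mk.injEq] at *
      omega
    · rintro ⟨a, b⟩ ⟨h1, h2, h3⟩
      simp only at h1 h2 h3
      have e1 : a % 2 = 1 := by
        by_contra h
        have := sq_mod8_even (y := a) (by omega)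
        omega
      have e2 : b % 2 = 0 := by
        by_contra h
        have := sq_mod8_odd (y := b) (by omega)
        have := sq_mod8_odd e1
        omega
      obtain ⟨d, rfl⟩ : 2 ∣ b := by omega
      have c1 : c6 a := by unfold c6; omega
      have c2 : ¬ 3 ∣ d := by omega
      have := g24_eq c1
      have := g3_eq c2
      rw [mul_pow] at h3
      refine ⟨(a, d), ⟨c1, c2, ?_⟩, rfl⟩
      simp only
      omega
  rw [this, PP_val _ (by omega)]
  simp only [th, coeff_mk]
  congr 1
  apply propext
  constructor
  · rintro (⟨c, hc⟩ | ⟨c, hc⟩)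
    · exfalso
      rcases Nat.mod_two_eq_zero_or_one c with h | h
      · have := sq_mod8_even h
        omega
      · have := sq_mod8_odd h
        omega
    · have e1 : c % 2 = 1 := by
        by_contra h
        have := sq_mod8_even (y := c) (by omega)
        omega
      refine ⟨c, e1, ?_⟩
      have := g8_eq e1
      omega
  · rintro ⟨c, hc, rfl⟩
    refine Or.inr ⟨c, ?_⟩
    have := g8_eq hc
    omega

lemma I3_bij (m : ℕ) : {w : ℕ × ℕ | c6 w.1 ∧ w.2 % 2 = 1 ∧ 21 * g24 w.1 + g8 w.2 = 4 * m + 1}.ncard =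
    {w : ℤ × ℤ | 0 < w.1 ∧ w.1 ^ 2 + (7 : ℕ) * w.2 ^ 2 = (2 * m + 1 : ℕ) ∧ ¬ (3 : ℤ) ∣ w.1}.ncard := by
  symm
  apply Set.ncard_congr (fun w _ => ((w.1 - 3 * w.2).natAbs, (3 * w.1 + 7 * w.2).natAbs))
  · rintro ⟨a, b⟩ ⟨h1, h2, h3⟩
    simp only [Set.mem_ofPred_eq] at *
    push_cast at h2
    have hpar : (a + b) % 2 = 1 := by
      have : (a ^ 2 + 7 * b ^ 2) % 2 = 1 := by omega
      rcases Int.emod_two_eq_zero_or_one a with ha | ha <;>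
      rcases Int.emod_two_eq_zero_or_one b with hb | hb <;>
      simp [Int.add_emod, Int.mul_emod, pow_two, ha, hb] at this ⊢
    have c1 : c6 (a - 3 * b).natAbs := by unfold c6; omega
    have c2 : (3 * a + 7 * b).natAbs % 2 = 1 := by omega
    refine ⟨c1, c2, ?_⟩
    have e1 := g24_eq c1
    have e2 := g8_eq c2
    zify at e1 e2 ⊢
    rw [sq_abs] at e1 e2
    linarith
  · rintro ⟨a, b⟩ ⟨c, d⟩ ⟨h1, h2, h3⟩ ⟨h1', h2', h3'⟩ h
    simp only [Set.mem_ofPred_eq, Prod.mk.injEq] at *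
    have hp : ∀ a b : ℤ, a ^ 2 + 7 * b ^ 2 = 2 * m + 1 → (a + b) % 2 = 1 := by
      intro a b h
      have : (a ^ 2 + 7 * b ^ 2) % 2 = 1 := by omega
      rcases Int.emod_two_eq_zero_or_one a with ha | ha <;>
      rcases Int.emod_two_eq_zero_or_one b with hb | hb <;>
      simp [Int.add_emod, Int.mul_emod, pow_two, ha, hb] at this ⊢
    have p1 := hp a b (by push_cast at h2; exact h2)
    have p2 := hp c d (by push_cast at h2'; exact h2')
    omega
  · rintro ⟨Y, x⟩ ⟨h1, h2, h3⟩
    simp only at h1 h2 h3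
    have e1 := g24_eq h1
    have e2 := g8_eq h2
    have hE : (x : ℤ) ^ 2 + 7 * (Y : ℤ) ^ 2 = 16 * (2 * m + 1) := by
      zify at e1 e2 h3; linarith
    have key : ∀ x' : ℤ, x' = x ∨ x' = -x → (16 : ℤ) ∣ x' - 3 * Y → ∃ w : ℤ × ℤ, ∃ _ : w ∈ {w : ℤ × ℤ | 0 < w.1 ∧ w.1 ^ 2 + (7 : ℕ) * w.2 ^ 2 = (2 * m + 1 : ℕ) ∧ ¬ (3 : ℤ) ∣ w.1},
        ((w.1 - 3 * w.2).natAbs, (3 * w.1 + 7 * w.2).natAbs) = (Y, x) := by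
      intro x' hx' hd
      obtain ⟨b, hb⟩ := hd
      have hx2 : x' ^ 2 = (x : ℤ) ^ 2 := by rcases hx' with h | h <;> rw [h]; ring
      obtain ⟨a, ha⟩ : ∃ a : ℤ, a = Y + 3 * b := ⟨_, rfl⟩
      have hy : (Y : ℤ) = a - 3 * b := by omega
      have hxx : x' = 3 * a + 7 * b := by omega
      rw [← hx2, hy, hxx] at hE
      have hform : a ^ 2 + 7 * b ^ 2 = 2 * m + 1 := by linarith
      unfold c6 at h1
      have ha3 : ¬ (3 : ℤ) ∣ a := by omega
      rcases lt_trichotomy a 0 with hlt | hlt | hlt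
      · refine ⟨(-a, -b), ⟨by simpa using hlt, by push_cast; simpa using hform, ?_⟩, ?_⟩
        · simp only; omega
        · simp only [Prod.mk.injEq]; omega
      · omega
      · refine ⟨(a, b), ⟨by simpa using hlt, by push_cast; simpa using hform, ?_⟩, ?_⟩
        · simp only; omega
        · simp only [Prod.mk.injEq]; omega
    have hYodd : Y % 2 = 1 := by unfold c6 at h1; omega
    have hprod : ((x : ℤ) - 3 * Y) * (x + 3 * Y) = 32 * (m - 12 * g24 Y) := by
      zify at e1
      linear_combination hE - 16 * e1
    rcases (by omega : x % 4 = Y % 4 ∨ (x + Y) % 4 = 0) with h | h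
    · -- x + 3Y divisible by 4
      obtain ⟨u, hu⟩ : ∃ u : ℤ, (x : ℤ) - 3 * Y = 2 * (2 * u + 1) :=
        ⟨((x : ℤ) - 3 * Y) / 4, by omega⟩
      have : (16 : ℤ) ∣ (2 * u + 1) * (x + 3 * Y) := by
        refine ⟨m - 12 * g24 Y, ?_⟩
        rw [hu] at hprod; linarith
      have hc : IsCoprime (16 : ℤ) (2 * u + 1) := by
        have : IsCoprime (2 : ℤ) (2 * u + 1) := ⟨-u, 1, by ring⟩
        simpa using this.pow_left (m := 4)
      have := hc.dvd_of_dvd_mul_left this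
      refine key (-x) (Or.inr rfl) ?_
      omega
    · obtain ⟨u, hu⟩ : ∃ u : ℤ, (x : ℤ) + 3 * Y = 2 * (2 * u + 1) :=
        ⟨((x : ℤ) + 3 * Y) / 4, by omega⟩
      have : (16 : ℤ) ∣ (2 * u + 1) * (x - 3 * Y) := by
        refine ⟨m - 12 * g24 Y, ?_⟩
        rw [hu] at hprod; linarith
      have hc : IsCoprime (16 : ℤ) (2 * u + 1) := by
        have : IsCoprime (2 : ℤ) (2 * u + 1) := ⟨-u, 1, by ring⟩
        simpa using this.pow_left (m := 4)
      have := hc.dvd_of_dvd_mul_left this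
      exact key x (Or.inl rfl) this

lemma I3 (m : ℕ) : coeff (4 * m + 1) (expand 21 (by norm_num) Th * Ps) =
    coeff m (expand 12 (by norm_num) Th) := by
  classical
  rw [Th, Ps, th_expand, th_coeff_mul _ _ _ _ (g24_inj 21 (by norm_num)) g8_inj, I3_bij,
    ncard_C 7 _ (by norm_num), th_expand]
  simp only [th, coeff_mk]
  congr 1
  apply propext
  constructor
  · rintro ⟨c, hc, h3⟩
    have e1 : c % 2 = 1 := by
      by_contra h
      have := sq_mod8_even (y := c) (by omega)
      omega
    have c1 : c6 c := by unfold c6; omega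
    refine ⟨c, c1, ?_⟩
    have := g24_eq c1
    omega
  · rintro ⟨c, hc, rfl⟩
    refine ⟨c, ?_, ?_⟩
    · have := g24_eq hc
      omega
    · unfold c6 at hc; omega

lemma I4 (m : ℕ) : coeff m (expand 3 (by norm_num) Th * Om) =
    (({w : ℕ × ℕ | ¬ 3 ∣ w.1 ∧ 3 * w.1 ^ 2 + 8 * w.2 ^ 2 = 24 * m + 11}.ncard : ℕ) : ZMod 2) := by
  rw [Th, Om, th_expand, th_coeff_mul _ _ _ _ (g24_inj 3 (by norm_num)) g3_inj]
  congr 2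
  ext ⟨a, b⟩
  simp only [Set.mem_ofPred_eq]
  constructor
  · rintro ⟨h1, h2, h3⟩
    have := g24_eq h1
    have := g3_eq h2
    unfold c6 at h1
    refine ⟨by omega, by omega⟩
  · rintro ⟨h1, h3⟩
    have e1 : a % 2 = 1 := by
      by_contra h
      have := sq_mod8_even (y := a) (by omega)
      omega
    have c1 : c6 a := by unfold c6; omega
    have c2 : ¬ 3 ∣ b := by
      rintro ⟨d, rfl⟩
      rw [mul_pow] at h3
      omega
    have := g24_eq c1
    have := g3_eq c2
    refine ⟨c1, c2, by omega⟩

end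

noncomputable section

open PowerSeries

lemma Th_pent : pentagonalSeries (ZMod 2) = Th := by
  classical
  ext n
  simp only [Th, th, coeff_mk]
  have hiff : (∃ y, c6 y ∧ g24 y = n) ↔ n ∈ Set.range pentagonal := by
    constructor
    · rintro ⟨y, hy, rfl⟩
      have e := g24_eq hy
      have : ∃ k : ℤ, (y : ℤ) = 6 * k - 1 ∨ (y : ℤ) = - (6 * k - 1) := by
        rcases hy with h | h
        · exact ⟨-(y / 6 : ℕ), by omega⟩
        · exact ⟨(y / 6 : ℕ) + 1, by omega⟩
      obtain ⟨k, hk⟩ := this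
      refine ⟨k, ?_⟩
      have e2 := two_mul_natCast_pentagonal k
      zify at e ⊢
      have : (y : ℤ) ^ 2 = (6 * k - 1) ^ 2 := by rcases hk with h | h <;> rw [h]; ring
      rw [this] at e
      linarith
    · rintro ⟨k, rfl⟩
      have c : c6 (6 * k - 1).natAbs := by unfold c6; omega
      refine ⟨(6 * k - 1).natAbs, c, ?_⟩
      have e := g24_eq c
      have e2 := two_mul_natCast_pentagonal k
      zify at e ⊢
      rw [sq_abs] at e
      linarith
  have h01 : ∀ x : ZMod 2, x ≠ 0 → x = 1 := by decide
  split_ifs with h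
  · apply h01
    rw [Ne, coeff_pentagonalSeries_eq_zero_iff, not_not]
    exact hiff.1 h
  · rw [coeff_pentagonalSeries_eq_zero]
    exact fun h' => h (hiff.2 h')

def BB : (ZMod 2)⟦X⟧ := PowerSeries.mk fun n => (b21 n : ZMod 2)

open PowerSeries.WithPiTopology in
lemma BB_mul : BB * Th = expand 21 (by norm_num) Th := by
  let _ : TopologicalSpace (ZMod 2) := ⊥
  have _ : DiscreteTopology (ZMod 2) := ⟨rfl⟩
  have h1 : BB = ∏' i, if ¬ 21 ∣ (i + 1) then ∑' j : ℕ, X ^ ((i + 1) * j) else 1 :=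
    Nat.Partition.powerSeriesMk_card_restricted_eq_tprod (ZMod 2) (¬ 21 ∣ ·)
  have h3 : HasProd (fun i : ℕ => (1 - X ^ ((i + 1) * 21) : (ZMod 2)⟦X⟧)) (expand 21 (by norm_num) Th) := by
    have h := hasProd_one_sub_X_pow (ZMod 2)
    rw [Th_pent, HasProd, tendsto_iff_coeff_tendsto] at h
    rw [HasProd, tendsto_iff_coeff_tendsto]
    intro d
    have hp : ∀ s : Finset ℕ, ∏ i ∈ s, (1 - X ^ ((i + 1) * 21) : (ZMod 2)⟦X⟧) =
        expand 21 (by norm_num) (∏ i ∈ s, (1 - X ^ (i + 1))) := by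
      intro s
      rw [map_prod]
      refine Finset.prod_congr rfl fun i _ => ?_
      rw [map_sub, map_one, map_pow, expand_X, ← pow_mul, mul_comm]
    simp only [hp, coeff_expand]
    split_ifs
    · exact h _
    · exact tendsto_const_nhds
  rw [← h3.tprod_eq, h1, ← Th_pent, ← tprod_one_sub_X_pow (ZMod 2)]
  rw [← (Nat.Partition.multipliable_powerSeriesMk_card_restricted (ZMod 2) (¬ 21 ∣ ·)).tprod_mul
    (multipliable_one_sub_X_pow _)]
  simp_rw [ite_not, ite_mul, pow_mul]
  conv in fun b ↦ _ =>
    ext b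
    rw [tsum_pow_mul_one_sub_of_constantCoeff_eq_zero (by simp)]
  refine tprod_eq_tprod_of_ne_one_bij (fun i ↦ (i.val + 1) * 21 - 1) ?_ ?_ ?_
  · intro a b h
    exact SetCoe.ext (by simp only at h; omega)
  · suffices ∀ (i : ℕ), 21 ∣ i + 1 → ∃ j ≠ 0, j * 21 - 1 = i by simpa
    intro i hi
    obtain ⟨j, hj⟩ := dvd_def.mp hi
    exact ⟨j, by omega, by omega⟩
  · intro i
    have : (i.val + 1) * 21 - 1 + 1 = (i.val + 1) * 21 := by omega
    simp [this, pow_mul]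

def UU (F : (ZMod 2)⟦X⟧) : (ZMod 2)⟦X⟧ := PowerSeries.mk fun m => coeff (4 * m + 1) F

lemma UU_mul (F G : (ZMod 2)⟦X⟧) : UU (F * expand 4 (by norm_num) G) = UU F * G := by
  ext m
  simp only [UU, coeff_mk, coeff_mul]
  symm
  apply Finset.sum_of_injOn (fun p : ℕ × ℕ => (4 * p.1 + 1, 4 * p.2))
  · rintro ⟨a, b⟩ _ ⟨c, d⟩ _ h
    simp at h ⊢
    exact h
  · rintro ⟨a, b⟩ h
    simp at h ⊢
    omega
  · rintro ⟨a, b⟩ h1 h2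
    simp only [coeff_expand]
    rw [if_neg, mul_zero]
    rintro ⟨d, hd⟩
    apply h2
    simp at h1 ⊢
    refine ⟨a / 4, d, ?_⟩
    omega
  · rintro ⟨a, b⟩ h
    simp [coeff_expand_mul]

lemma Th_ne : Th ≠ 0 := by
  intro h
  have : coeff 0 Th = 0 := by rw [h]; simp
  simp only [Th, th, coeff_mk] at this
  rw [if_pos ⟨1, by unfold c6; simp, by simp [g24]⟩] at this
  exact one_ne_zero this

lemma Th_cube : Th ^ 3 = Ps := by
  rw [← I1, ← sq_expand]; ring

lemma pow4 (F : (ZMod 2)⟦X⟧) : F ^ 4 = expand 4 (by norm_num) F := by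
  have := expand_mul 2 two_ne_zero 2 two_ne_zero F
  norm_num at this
  rw [this, ← sq_expand, ← sq_expand, ← pow_mul]

lemma UBB : UU BB = expand 3 (by norm_num) Th * Om := by
  apply mul_right_cancel₀ Th_ne
  rw [← UU_mul, ← pow4]
  have e1 : BB * Th ^ 4 = expand 21 (by norm_num) Th * Ps := by
    rw [← BB_mul, ← Th_cube]; ring
  rw [e1]
  have e2 : UU (expand 21 (by norm_num) Th * Ps) = expand 12 (by norm_num) Th := by
    ext m
    simp only [UU, coeff_mk]
    exact I3 m
  have e3 : expand 12 (by norm_num) Th = (expand 3 (by norm_num) Th) ^ 4 := by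
    rw [pow4, ← expand_mul]
  rw [e2, e3, mul_assoc, mul_comm Om, I2, ← Th_cube, map_pow]
  ring

lemma b21_count (m : ℕ) : (b21 (4 * m + 1) : ZMod 2) =
    (({w : ℕ × ℕ | ¬ 3 ∣ w.1 ∧ 3 * w.1 ^ 2 + 8 * w.2 ^ 2 = 24 * m + 11}.ncard : ℕ) : ZMod 2) := by
  rw [← I4, ← UBB]
  simp [UU, BB]

end

noncomputable section

lemma D1 (q : ℕ) (h11 : ¬ 11 ∣ q) (h2 : q % 2 = 1) :
   {w : ℕ × ℕ | ¬ 3 ∣ w.1 ∧ 3 * w.1 ^ 2 + 8 * w.2 ^ 2 = 11 * q}.ncard =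
   {w : ℤ × ℤ | 0 < w.1 ∧ w.1 ^ 2 + (24 : ℕ) * w.2 ^ 2 = q ∧ ¬ (3 : ℤ) ∣ w.1 + w.2}.ncard := by
  symm
  apply Set.ncard_congr (fun w _ => ((w.1 - 8 * w.2).natAbs, (w.1 + 3 * w.2).natAbs))
  · rintro ⟨a, b⟩ ⟨h1, h2, h3⟩
    simp only [Set.mem_ofPred_eq] at *
    refine ⟨by omega, ?_⟩
    zify
    rw [sq_abs, sq_abs]
    push_cast at h2
    linear_combination 11 * h2
  · have aux : ∀ a b : ℤ, a ^ 2 + (24 : ℕ) * b ^ 2 = q → ¬ (11 : ℤ) ∣ a - 8 * b := by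
      rintro a b h ⟨c, hc⟩
      apply h11
      zify
      refine ⟨11 * c ^ 2 + 16 * b * c + 8 * b ^ 2, ?_⟩
      rw [← h, show a = 8 * b + 11 * c by linarith]
      push_cast
      ring
    rintro ⟨a, b⟩ ⟨c, d⟩ ⟨h1, h2, h3⟩ ⟨h1', h2', h3'⟩ h
    simp only [Prod.mk.injEq] at *
    have := aux _ _ h2
    have := aux _ _ h2'
    omega
  · rintro ⟨x, s⟩ ⟨h1, h3⟩
    simp only at h1 h3
    zify at h3
    have key : ∀ s' : ℤ, s' = s ∨ s' = -s → (11 : ℤ) ∣ s' - x → ∃ w : ℤ × ℤ, ∃ _ : w ∈ {w : ℤ × ℤ | 0 < w.1 ∧ w.1 ^ 2 + (24 : ℕ) * w.2 ^ 2 = q ∧ ¬ (3 : ℤ) ∣ w.1 + w.2},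
        ((w.1 - 8 * w.2).natAbs, (w.1 + 3 * w.2).natAbs) = (x, s) := by
      intro s' hs' hd
      obtain ⟨b, hb⟩ := hd
      have hs2 : s' ^ 2 = (s : ℤ) ^ 2 := by rcases hs' with h | h <;> rw [h]; ring
      obtain ⟨a, ha⟩ : ∃ a : ℤ, a = x + 8 * b := ⟨_, rfl⟩
      have hx : (x : ℤ) = a - 8 * b := by omega
      have hss : s' = a + 3 * b := by omega
      rw [← hs2, hx, hss] at h3
      have hform : a ^ 2 + 24 * b ^ 2 = q := by linarith
      have ha0 : a ≠ 0 := by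
        rintro rfl
        have : (q : ℤ) = 24 * b ^ 2 := by linarith
        omega
      rcases lt_or_gt_of_ne ha0 with hlt | hlt
      · refine ⟨(-a, -b), ⟨by simpa using hlt, by push_cast; simpa using hform, ?_⟩, ?_⟩
        · simp only; omega
        · simp only [Prod.mk.injEq]; omega
      · refine ⟨(a, b), ⟨by simpa using hlt, by push_cast; simpa using hform, ?_⟩, ?_⟩
        · simp only; omega
        · simp only [Prod.mk.injEq]; omega
    have hp : Prime (11 : ℤ) := by norm_num
    have : (11 : ℤ) ∣ 3 * (((s : ℤ) - x) * (s + x)) := ⟨s ^ 2 - q, by linear_combination -h3⟩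
    rcases hp.dvd_or_dvd this with h | h
    · norm_num at h
    rcases hp.dvd_or_dvd h with h | h
    · exact key s (Or.inl rfl) h
    · refine key (-s) (Or.inr rfl) ?_
      omega

section
variable (p : ℕ)

def ES (j : ℕ) : Set (ℕ × ℕ) := {w : ℕ × ℕ | ¬ 3 ∣ w.1 ∧ ¬ 3 ∣ w.2 ∧ w.1 ^ 2 + 24 * w.2 ^ 2 = p ^ (2 * j)}
def EP (j : ℕ) : Set (ℕ × ℕ) := {w : ℕ × ℕ | ¬ 3 ∣ w.1 ∧ ¬ 3 ∣ w.2 ∧ w.1 ^ 2 + 24 * w.2 ^ 2 = p ^ (2 * j) ∧ ¬ p ∣ w.1}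

lemma p_dvd (hp : p.Prime) (h5 : 5 ≤ p) {b : ℤ} (h : (p : ℤ) ∣ 24 * b ^ 2) : (p : ℤ) ∣ b := by
  have hpz : Prime (p : ℤ) := Nat.prime_iff_prime_int.1 hp
  rcases hpz.dvd_or_dvd h with h | h
  · exfalso
    have h' : p ∣ 24 := by exact_mod_cast h
    rw [show 24 = 2 ^ 3 * 3 by norm_num, hp.dvd_mul] at h'
    rcases h' with h' | h'
    · have := Nat.le_of_dvd (by norm_num) (hp.dvd_of_dvd_pow h')
      omega
    · have := Nat.le_of_dvd (by norm_num) h'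
      omega
  · exact hpz.dvd_of_dvd_pow h

lemma ES_rec (hp : p.Prime) (h5 : 5 ≤ p) (j : ℕ) : (ES p (j + 1)).ncard = (ES p j).ncard + (EP p (j + 1)).ncard := by
  have h3p : ¬ 3 ∣ p := by
    intro h
    have := (Nat.prime_dvd_prime_iff_eq Nat.prime_three hp).1 h
    omega
  have hfin : (ES p (j + 1)).Finite := by
    apply (Set.finite_Iic ((p ^ (2 * (j + 1)), p ^ (2 * (j + 1))) : ℕ × ℕ)).subset
    rintro ⟨a, b⟩ ⟨_, _, h⟩
    simp only at h
    have := Nat.le_self_pow two_ne_zero a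
    have := Nat.le_self_pow two_ne_zero b
    exact ⟨by simp only; omega, by simp only; omega⟩
  have := Set.ncard_inter_add_ncard_sdiff_eq_ncard (ES p (j + 1)) {w | p ∣ w.1} hfin
  rw [← this]
  congr 1
  · symm
    apply Set.ncard_congr (fun w _ => (p * w.1, p * w.2))
    · rintro ⟨a, b⟩ ⟨h1, h2, h3⟩
      simp only [ES, Set.mem_inter_iff, Set.mem_ofPred_eq] at *
      refine ⟨⟨?_, ?_, ?_⟩, dvd_mul_right _ _⟩
      · rw [Nat.prime_three.dvd_mul]; tauto
      · rw [Nat.prime_three.dvd_mul]; tauto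
      · rw [show 2 * (j + 1) = 2 * j + 2 by ring, pow_add, ← h3]; ring
    · rintro ⟨a, b⟩ ⟨c, d⟩ _ _ h
      simp only [Prod.mk.injEq] at *
      exact ⟨Nat.eq_of_mul_eq_mul_left hp.pos h.1, Nat.eq_of_mul_eq_mul_left hp.pos h.2⟩
    · rintro ⟨a, b⟩ ⟨⟨h1, h2, h3⟩, ⟨c, rfl⟩⟩
      simp only at *
      have hb : p ∣ b := by
        have : (p : ℤ) ∣ 24 * (b : ℤ) ^ 2 := by
          zify at h3
          exact ⟨p ^ (2 * j + 1) - p * c ^ 2, by linear_combination h3⟩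
        exact_mod_cast p_dvd p hp h5 this
      obtain ⟨d, rfl⟩ := hb
      refine ⟨(c, d), ⟨fun h => h1 (h.mul_left _), fun h => h2 (h.mul_left _), ?_⟩, rfl⟩
      simp only
      have : p ^ 2 * (c ^ 2 + 24 * d ^ 2) = p ^ 2 * p ^ (2 * j) := by
        linarith [h3, (by ring : p ^ (2 * (j + 1)) = p ^ 2 * p ^ (2 * j)),
          (by ring : p ^ 2 * (c ^ 2 + 24 * d ^ 2) = (p * c) ^ 2 + 24 * (p * d) ^ 2)]
      exact Nat.eq_of_mul_eq_mul_left (pow_pos hp.pos 2) this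
  · congr 1
    ext ⟨a, b⟩
    simp only [ES, EP, Set.mem_sdiff, Set.mem_ofPred_eq]
    tauto

/-- uniqueness of primitive representations -/
lemma uniq (hp : p.Prime) (h5 : 5 ≤ p) (l : ℕ) (hl : 1 ≤ l) (a b c d : ℤ)
    (h1 : a ^ 2 + 24 * b ^ 2 = p ^ (2 * l)) (h2 : c ^ 2 + 24 * d ^ 2 = p ^ (2 * l))
    (ha : ¬ (p : ℤ) ∣ a) (hc : ¬ (p : ℤ) ∣ c) : a ^ 2 = c ^ 2 ∧ b ^ 2 = d ^ 2 := by
  have hpz : Prime (p : ℤ) := Nat.prime_iff_prime_int.1 hp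
  obtain ⟨q, hq⟩ : ∃ q : ℤ, q = (p : ℤ) ^ (2 * l) := ⟨_, rfl⟩
  have hq0 : 0 < q := by rw [hq]; exact pow_pos (by exact_mod_cast hp.pos) _
  have hpq : (p : ℤ) ∣ q := by rw [hq]; exact dvd_pow_self _ (by omega)
  rw [← hq] at h1 h2
  have hd : ¬ (p : ℤ) ∣ d := by
    intro h
    apply hc
    apply hpz.dvd_of_dvd_pow (n := 2)
    have : c ^ 2 = q - d * (24 * d) := by linarith
    rw [this]
    exact dvd_sub hpq (h.mul_right _)
  have hprod : (a * d - c * b) * (a * d + c * b) = q * (d ^ 2 - b ^ 2) := by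
    linear_combination d ^ 2 * h1 - b ^ 2 * h2
  have fin : ∀ e : ℤ, (a * d - c * b = e ∨ a * d + c * b = e) → q ∣ e → e = 0 := by
    intro e he ⟨f, hf⟩
    have : ∃ g : ℤ, g ^ 2 + 24 * e ^ 2 = q ^ 2 := by
      rcases he with rfl | rfl
      · exact ⟨a * c + 24 * b * d, by rw [sq q]; nth_rewrite 1 [← h1]; rw [← h2]; ring⟩
      · exact ⟨a * c - 24 * b * d, by rw [sq q]; nth_rewrite 1 [← h1]; rw [← h2]; ring⟩
    obtain ⟨g, hg⟩ := this
    by_contra hne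
    have hf0 : f ≠ 0 := by rintro rfl; simp at hf; exact hne hf
    have : 1 ≤ f ^ 2 := by
      have := sq_pos_of_ne_zero hf0
      omega
    rw [hf] at hg
    nlinarith [sq_nonneg g, pow_pos hq0 2]
  have hz : (a * d - c * b) * (a * d + c * b) = 0 := by
    by_cases h : (p : ℤ) ∣ a * d - c * b
    · have h' : ¬ (p : ℤ) ∣ a * d + c * b := by
        intro h'
        have := dvd_add h h'
        have h3 : (p : ℤ) ∣ 2 * (a * d) := by
          have e : 2 * (a * d) = (a * d - c * b) + (a * d + c * b) := by ring
          rw [e]; exact this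
        rcases hpz.dvd_or_dvd h3 with h3 | h3
        · have := Int.le_of_dvd (by norm_num) h3
          omega
        · rcases hpz.dvd_or_dvd h3 with h3 | h3
          · exact ha h3
          · exact hd h3
      have hcop : IsCoprime q (a * d + c * b) := by
        rw [hq]
        exact ((Prime.coprime_iff_not_dvd hpz).2 h').pow_left
      have : q ∣ a * d - c * b := hcop.dvd_of_dvd_mul_right ⟨_, hprod⟩
      rw [fin _ (Or.inl rfl) this, zero_mul]
    · have hcop : IsCoprime q (a * d - c * b) := by
        rw [hq]
        exact ((Prime.coprime_iff_not_dvd hpz).2 h).pow_left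
      have : q ∣ a * d + c * b := hcop.dvd_of_dvd_mul_left ⟨_, hprod⟩
      rw [fin _ (Or.inr rfl) this, mul_zero]
  rw [hz] at hprod
  rcases mul_eq_zero.1 hprod.symm with h | h
  · omega
  · constructor <;> linarith

lemma exist_seq (hp : p.Prime) (h5 : 5 ≤ p) (u w : ℤ) (huw : u ^ 2 + 24 * w ^ 2 = p ^ 2)
    (hu : ¬ (p : ℤ) ∣ u) (l : ℕ) : ∃ U W : ℤ, U ^ 2 + 24 * W ^ 2 = p ^ (2 * (l + 1)) ∧ ¬ (p : ℤ) ∣ U ∧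
      (p : ℤ) ∣ u * W - w * U ∧ (3 : ℤ) ∣ W * u - (l + 1) * w * U := by
  have hpz : Prime (p : ℤ) := Nat.prime_iff_prime_int.1 hp
  induction l with
  | zero => exact ⟨u, w, by simpa using huw, hu, ⟨0, by ring⟩, ⟨0, by push_cast; ring⟩⟩
  | succ l ih =>
    obtain ⟨U, W, h1, h2, ⟨e, he⟩, ⟨f, hf⟩⟩ := ih
    refine ⟨u * U - 24 * w * W, u * W + w * U, ?_, ?_, ?_, ?_⟩
    · rw [show 2 * (l + 1 + 1) = 2 + 2 * (l + 1) by ring, pow_add, ← huw, ← h1]; ring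
    · intro h
      have h3 : (p : ℤ) ∣ 2 * (u ^ 2 * U) := by
        obtain ⟨g, hg⟩ := h
        refine ⟨u * g + p * U + 24 * w * e, ?_⟩
        linear_combination u * hg + U * huw + 24 * w * he
      rcases hpz.dvd_or_dvd h3 with h3 | h3
      · have := Int.le_of_dvd (by norm_num) h3
        omega
      · rcases hpz.dvd_or_dvd h3 with h3 | h3
        · exact hu (hpz.dvd_of_dvd_pow h3)
        · exact h2 h3
    · exact ⟨p * W, by linear_combination W * huw⟩
    · refine ⟨u * f + 8 * (l + 1 + 1) * w ^ 2 * W, ?_⟩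
      push_cast
      linear_combination u * hf

lemma EP_split (hp : p.Prime) (h5 : 5 ≤ p) (u w : ℤ) (huw : u ^ 2 + 24 * w ^ 2 = p ^ 2)
    (hu : ¬ (p : ℤ) ∣ u) (l : ℕ) :
    (EP p (l + 1)).ncard = if (3 : ℤ) ∣ (l + 1) * w then 0 else 1 := by
  have h3p : ¬ 3 ∣ p := by
    intro h
    have := (Nat.prime_dvd_prime_iff_eq Nat.prime_three hp).1 h
    omega
  have p3 : Prime (3 : ℤ) := Int.prime_three
  have h3pz : ¬ (3 : ℤ) ∣ p := by exact_mod_cast h3p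
  have nd : ∀ a b : ℤ, ∀ n, a ^ 2 + 24 * b ^ 2 = p ^ n → ¬ (3 : ℤ) ∣ a := by
    rintro a b n h ⟨c, rfl⟩
    apply h3pz
    apply p3.dvd_of_dvd_pow (n := n)
    exact ⟨3 * c ^ 2 + 8 * b ^ 2, by rw [← h]; ring⟩
  obtain ⟨U, W, h1, h2, -, h4⟩ := exist_seq p hp h5 u w huw hu l
  have hu3 := nd u w 2 huw
  have hU3 := nd U W _ h1
  have hiff : (3 : ℤ) ∣ W ↔ (3 : ℤ) ∣ (l + 1) * w := by
    constructor
    · intro h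
      have : (3 : ℤ) ∣ (l + 1) * w * U := by
        have := dvd_sub (h.mul_right u) h4
        simpa using this
      exact (p3.dvd_or_dvd this).resolve_right hU3
    · intro h
      have : (3 : ℤ) ∣ W * u := by
        have := dvd_add h4 (h.mul_right U)
        simpa using this
      exact (p3.dvd_or_dvd this).resolve_right hu3
  have huniq : ∀ a b : ℕ, a ^ 2 + 24 * b ^ 2 = p ^ (2 * (l + 1)) → ¬ p ∣ a → a = U.natAbs ∧ b = W.natAbs := by
    intro a b h h'
    have := uniq p hp h5 (l + 1) (by omega) a b U W (by exact_mod_cast h) h1 (by exact_mod_cast h') h2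
    have e1 := Int.natAbs_eq_iff_sq_eq.2 this.1
    have e2 := Int.natAbs_eq_iff_sq_eq.2 this.2
    simp at e1 e2
    exact ⟨e1, e2⟩
  split_ifs with h
  · rw [← hiff] at h
    have : EP p (l + 1) = ∅ := by
      ext ⟨a, b⟩
      simp only [EP, Set.mem_ofPred_eq, Set.mem_empty_iff_false, iff_false]
      rintro ⟨i1, i2, i3, i4⟩
      have := huniq a b i3 i4
      omega
    rw [this, Set.ncard_empty]
  · rw [← hiff] at h
    have : EP p (l + 1) = {(U.natAbs, W.natAbs)} := by
      ext ⟨a, b⟩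
      simp only [EP, Set.mem_ofPred_eq, Set.mem_singleton_iff, Prod.mk.injEq]
      constructor
      · rintro ⟨i1, i2, i3, i4⟩
        exact huniq a b i3 i4
      · rintro ⟨rfl, rfl⟩
        refine ⟨by omega, by omega, ?_, ?_⟩
        · zify
          rw [sq_abs, sq_abs]
          exact h1
        · rw [← Int.natCast_dvd]; exact h2
    rw [this, Set.ncard_singleton]

lemma EP_inert (hp : p.Prime) (h5 : 5 ≤ p) (h : ∀ t : ZMod p, t ^ 2 ≠ -6) (l : ℕ) :
    EP p (l + 1) = ∅ := by
  haveI := Fact.mk hp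
  ext ⟨a, b⟩
  simp only [EP, Set.mem_ofPred_eq, Set.mem_empty_iff_false, iff_false]
  rintro ⟨-, -, i3, i4⟩
  have e : ((a : ZMod p)) ^ 2 + 24 * (b : ZMod p) ^ 2 = 0 := by
    have := congrArg (Nat.cast : ℕ → ZMod p) i3
    push_cast at this
    rw [this, ZMod.natCast_self, zero_pow (by omega)]
  have ha : (a : ZMod p) ≠ 0 := by
    rwa [Ne, ZMod.natCast_eq_zero_iff]
  have hb : (2 * b : ZMod p) ≠ 0 := by
    intro hb
    apply ha
    have : (a : ZMod p) ^ 2 = 0 := by linear_combination e - 6 * (2 * b : ZMod p) * hb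
    exact pow_eq_zero_iff two_ne_zero |>.1 this
  apply h (a / (2 * b))
  rw [div_pow, div_eq_iff (pow_ne_zero 2 hb)]
  linear_combination e

lemma thue (hp : p.Prime) (t : ZMod p) : ∃ a b : ℤ, (a ≠ 0 ∨ b ≠ 0) ∧ a ^ 2 < p ∧ b ^ 2 < p ∧
    (a : ZMod p) = t * b := by
  haveI := Fact.mk hp
  set r := Nat.sqrt p with hr
  have hr1 : r ^ 2 < p := by
    rcases (Nat.sqrt_le' p).lt_or_eq with h | h
    · exact h
    · exfalso
      exact (Irreducible.not_isSquare hp) ⟨r, by rw [hr, ← sq]; exact h.symm⟩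
  have hcard : (Finset.univ : Finset (ZMod p)).card < (Finset.range (r + 1) ×ˢ Finset.range (r + 1)).card := by
    rw [Finset.card_univ, ZMod.card, Finset.card_product, Finset.card_range]
    exact Nat.lt_succ_sqrt p
  obtain ⟨⟨x, y⟩, hx, ⟨x', y'⟩, hx', hne, heq⟩ := Finset.exists_ne_map_eq_of_card_lt_of_maps_to hcard
    (f := fun w : ℕ × ℕ => (w.1 : ZMod p) - t * w.2) (fun _ _ => Finset.mem_coe.2 (Finset.mem_univ _))
  simp only [Finset.mem_product, Finset.mem_range] at hx hx'
  have hb : ∀ x x' : ℕ, x < r + 1 → x' < r + 1 → ((x : ℤ) - x') ^ 2 < p := by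
    intro x x' h h'
    have : ((x : ℤ) - x') ^ 2 ≤ (r : ℤ) ^ 2 := sq_le_sq' (by omega) (by omega)
    have h2 : (r : ℤ) ^ 2 < p := by exact_mod_cast hr1
    omega
  refine ⟨x - x', y - y', ?_, hb _ _ hx.1 hx'.1, hb _ _ hx.2 hx'.2, ?_⟩
  · by_contra hcon
    push Not at hcon
    apply hne
    simp only [Prod.mk.injEq]
    omega
  · simp only at heq
    push_cast
    linear_combination heq

lemma reps (hp : p.Prime) (h5 : 5 ≤ p) (t : ZMod p) (ht : t ^ 2 = -6) :
    ∃ a b : ℤ, (p : ℤ) = a ^ 2 + 6 * b ^ 2 ∨ (p : ℤ) = 2 * a ^ 2 + 3 * b ^ 2 := by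
  haveI := Fact.mk hp
  obtain ⟨a, b, hab, ha, hb, h⟩ := thue p hp t
  have hd : (p : ℤ) ∣ a ^ 2 + 6 * b ^ 2 := by
    rw [← ZMod.intCast_zmod_eq_zero_iff_dvd]
    push_cast
    rw [h, mul_pow, ht]; ring
  obtain ⟨m, hm⟩ := hd
  have hpos : 0 < a ^ 2 + 6 * b ^ 2 := by
    rcases hab with h | h
    · have := sq_pos_of_ne_zero h
      nlinarith [sq_nonneg b]
    · have := sq_pos_of_ne_zero h
      nlinarith [sq_nonneg a]
  have hp0 : (0 : ℤ) < p := by exact_mod_cast hp.pos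
  have m0 : 0 < m := by
    rw [hm] at hpos
    exact pos_of_mul_pos_right hpos hp0.le
  have m7 : m < 7 := by
    have : (p : ℤ) * m < p * 7 := by rw [← hm]; linarith
    exact lt_of_mul_lt_mul_left this hp0.le
  have two : ∀ x : ℤ, (2 : ℤ) ∣ x ^ 2 → (2 : ℤ) ∣ x := fun x h => Int.prime_two.dvd_of_dvd_pow h
  have three : ∀ x : ℤ, (3 : ℤ) ∣ x ^ 2 → (3 : ℤ) ∣ x := fun x h => Int.prime_three.dvd_of_dvd_pow h
  interval_cases m
  · exact ⟨a, b, Or.inl (by linarith)⟩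
  · obtain ⟨c, rfl⟩ := two a (by omega)
    exact ⟨c, b, Or.inr (by linarith)⟩
  · obtain ⟨c, rfl⟩ := three a (by omega)
    exact ⟨b, c, Or.inr (by linarith)⟩
  · obtain ⟨c, rfl⟩ := two a (by omega)
    rw [mul_pow] at hm
    obtain ⟨d, rfl⟩ := two b (by omega)
    exact ⟨c, d, Or.inl (by linarith)⟩
  · have key : ∀ b : ℤ, a ^ 2 + 6 * b ^ 2 = p * 5 → (5 : ℤ) ∣ a + 2 * b → 
       ∃ a b : ℤ, (p : ℤ) = a ^ 2 + 6 * b ^ 2 ∨ (p : ℤ) = 2 * a ^ 2 + 3 * b ^ 2 := by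
      rintro b hm ⟨c, hc⟩
      have : a = 5 * c - 2 * b := by linarith
      subst this
      exact ⟨c - b, c, Or.inr (by linarith)⟩
    have p5 : Prime (5 : ℤ) := by norm_num
    have : (5 : ℤ) ∣ (a + 2 * b) * (a - 2 * b) := ⟨p - 2 * b ^ 2, by linear_combination hm⟩
    rcases p5.dvd_or_dvd this with h | h
    · exact key b hm h
    · exact key (-b) (by simpa using hm) (by simpa [sub_eq_add_neg] using h)
  · obtain ⟨c, rfl⟩ := two a (by omega)
    rw [mul_pow] at hm
    obtain ⟨d, rfl⟩ := three c (by omega)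
    exact ⟨b, d, Or.inl (by linarith)⟩

lemma exist_uw (hp : p.Prime) (h5 : 5 ≤ p) (t : ZMod p) (ht : t ^ 2 = -6) :
    ∃ u w : ℤ, u ^ 2 + 24 * w ^ 2 = p ^ 2 ∧ ¬ (p : ℤ) ∣ u := by
  have hpz : Prime (p : ℤ) := Nat.prime_iff_prime_int.1 hp
  have hp0 : (5 : ℤ) ≤ p := by exact_mod_cast h5
  have h2 : ¬ 2 ∣ p := fun h => by
    have := (Nat.prime_dvd_prime_iff_eq Nat.prime_two hp).1 h
    omega
  have h3 : ¬ 3 ∣ p := fun h => by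
    have := (Nat.prime_dvd_prime_iff_eq Nat.prime_three hp).1 h
    omega
  have two : ¬ (p : ℤ) ∣ 2 := fun h => by
    have := Int.le_of_dvd (by norm_num) h
    omega
  have sm : ∀ a : ℤ, a ^ 2 ≤ p → (p : ℤ) ∣ a → a = 0 := by
    rintro a h ⟨c, rfl⟩
    by_contra hne
    have hc : c ≠ 0 := by rintro rfl; simp at hne
    have : 1 ≤ c ^ 2 := by have := sq_pos_of_ne_zero hc; omega
    rw [mul_pow] at h
    have := mul_le_mul_of_nonneg_left this (sq_nonneg (p:ℤ))
    nlinarith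
  obtain ⟨a, b, h | h⟩ := reps p hp h5 t ht
  · refine ⟨a ^ 2 - 6 * b ^ 2, a * b, by rw [h]; ring, ?_⟩
    intro hd
    have : (p : ℤ) ∣ 2 * a ^ 2 := by
      obtain ⟨g, hg⟩ := hd
      exact ⟨g + 1, by linear_combination hg - h⟩
    have ha := sm a (by nlinarith [sq_nonneg b])
      (hpz.dvd_of_dvd_pow ((hpz.dvd_or_dvd this).resolve_left two))
    subst ha
    omega
  · refine ⟨2 * a ^ 2 - 3 * b ^ 2, a * b, by rw [h]; ring, ?_⟩
    intro hd
    have : (p : ℤ) ∣ 2 * (2 * a ^ 2) := by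
      obtain ⟨g, hg⟩ := hd
      exact ⟨g + 1, by linear_combination hg - h⟩
    have ha := sm a (by nlinarith [sq_nonneg b, sq_nonneg a])
      (hpz.dvd_of_dvd_pow ((hpz.dvd_or_dvd ((hpz.dvd_or_dvd this).resolve_left two)).resolve_left two))
    subst ha
    omega

lemma ES_even (hp : p.Prime) (h5 : 5 ≤ p) (k : ℕ) : (((ES p (3 * k)).ncard : ℕ) : ZMod 2) = 0 := by
  have h0 : ES p 0 = ∅ := by
    ext ⟨a, b⟩
    simp only [ES, Set.mem_ofPred_eq, Set.mem_empty_iff_false, iff_false]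
    rintro ⟨-, h2, h3⟩
    have : b ≠ 0 := by rintro rfl; simp at h2
    have := pow_pos (Nat.pos_of_ne_zero this) 2
    simp at h3
    omega
  induction k with
  | zero => simp [h0]
  | succ k ih =>
    rw [show 3 * (k + 1) = 3 * k + 1 + 1 + 1 by ring, ES_rec p hp h5, ES_rec p hp h5, ES_rec p hp h5]
    push_cast
    rw [ih]
    by_cases h : ∃ t : ZMod p, t ^ 2 = -6
    · obtain ⟨t, ht⟩ := h
      obtain ⟨u, w, huw, hu⟩ := exist_uw p hp h5 t ht
      rw [EP_split p hp h5 u w huw hu, EP_split p hp h5 u w huw hu, EP_split p hp h5 u w huw hu]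
      rw [if_pos (c := (3 : ℤ) ∣ (((3 * k + 1 + 1 : ℕ) : ℤ) + 1) * w) ⟨(k + 1) * w, by push_cast; ring⟩]
      by_cases hw : (3 : ℤ) ∣ w
      · rw [if_pos (hw.mul_left _), if_pos (hw.mul_left _)]; simp
      · have p3 : Prime (3 : ℤ) := Int.prime_three
        rw [if_neg, if_neg]
        · decide
        · intro h
          rcases p3.dvd_or_dvd h with h | h
          · push_cast at h; omega
          · exact hw h
        · intro h
          rcases p3.dvd_or_dvd h with h | h
          · push_cast at h; omega
          · exact hw h
    · push Not at h
      rw [EP_inert p hp h5 h, EP_inert p hp h5 h, EP_inert p hp h5 h]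
      simp

lemma main6 (hp : p.Prime) (h5 : 5 ≤ p) (h11 : p ≠ 11) (k : ℕ) :
    ∃ m, 11 * p ^ (6 * k) = 24 * m + 11 ∧ (11 * p ^ (6 * k) - 5) / 6 = 4 * m + 1 ∧ Odd (b21 (4 * m + 1)) := by
  have h2 : ¬ 2 ∣ p := fun h => by
    have := (Nat.prime_dvd_prime_iff_eq Nat.prime_two hp).1 h
    omega
  have h3 : ¬ 3 ∣ p := fun h => by
    have := (Nat.prime_dvd_prime_iff_eq Nat.prime_three hp).1 h
    omega
  have hpow : ∀ n, ¬ 2 ∣ p ^ n ∧ ¬ 3 ∣ p ^ n ∧ ¬ 11 ∣ p ^ n := by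
    intro n
    refine ⟨fun h => h2 (Nat.prime_two.dvd_of_dvd_pow h), fun h => h3 (Nat.prime_three.dvd_of_dvd_pow h), fun h => ?_⟩
    have := (Nat.prime_dvd_prime_iff_eq (by norm_num) hp).1 ((by norm_num : Nat.Prime 11).dvd_of_dvd_pow h)
    omega
  have hc : c6 (p ^ (3 * k)) := by
    have := hpow (3 * k)
    unfold c6
    omega
  have hg := g24_eq hc
  have hq : p ^ (6 * k) = (p ^ (3 * k)) ^ 2 := by rw [← pow_mul]; congr 1; ring
  refine ⟨11 * g24 (p ^ (3 * k)), by omega, by omega, ?_⟩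
  have := b21_count (11 * g24 (p ^ (3 * k)))
  rw [show 24 * (11 * g24 (p ^ (3 * k))) + 11 = 11 * p ^ (6 * k) by omega,
    D1 (p ^ (6 * k)) (hpow _).2.2 (by have := hpow (6 * k); omega), ncard_B 24 _ (by norm_num),
    if_pos ⟨p ^ (3 * k), hq.symm, (hpow _).2.1⟩] at this
  have hES := ES_even p hp h5 k
  unfold ES at hES
  rw [show 2 * (3 * k) = 6 * k by ring] at hES
  rw [hES, add_zero] at this
  exact ZMod.natCast_eq_one_iff_odd.1 this

end
end

theorem stmt_19 :
    (∀ p : ℕ, p.Prime → 5 ≤ p → p ≠ 11 →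
      ∃ μ ∈ ({4, 6} : Set ℕ), ∀ k : ℕ, Odd (b21 ((11 * p ^ (μ * k) - 5) / 6))) ∧
    {n : ℕ | Odd (b21 n)}.Infinite := by
  refine ⟨?_, ?_⟩
  · intro p hp h5 h11
    refine ⟨6, by simp, fun k => ?_⟩
    obtain ⟨m, -, h2, h3⟩ := main6 p hp h5 h11 k
    rw [h2]; exact h3
  · refine Set.infinite_of_injective_forall_mem (f := fun k : ℕ => (11 * 5 ^ (6 * k) - 5) / 6) ?_ ?_
    · intro k l h
      obtain ⟨m, h1, h2, -⟩ := main6 5 (by norm_num) (by norm_num) (by norm_num) k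
      obtain ⟨m', h1', h2', -⟩ := main6 5 (by norm_num) (by norm_num) (by norm_num) l
      simp only at h
      have e : 5 ^ (6 * k) = 5 ^ (6 * l) := by omega
      have := Nat.pow_right_injective (le_refl 2 |>.trans (by norm_num : 2 ≤ 5)) e
      omega
    · intro k
      obtain ⟨m, -, h2, h3⟩ := main6 5 (by norm_num) (by norm_num) (by norm_num) k
      show Odd (b21 ((11 * 5 ^ (6 * k) - 5) / 6))
      rw [h2]; exact h3
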